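/- The sequence $n \mapsto \dfrac{n! \cdot \sum_{k=0}^{5n-15} \binom{N}{k}}{\binom{N}{q}}$ of real numbers, where $N = \binom{n}{2}$ and $q = \lfloor N/2 \rfloor$, tends to $0$ as $n \to \infty$. (Since by Wright's theorem the number of isomorphism classes of graphs on $n$ vertices with exactly $q$ edges is asymptotic to $\binom{N}{q}/n!$, this shows that the proportion of isomorphism classes of graphs on $n$ vertices having at most $5n-15$ edges tends to $0$.) -/

import Mathlib

/-!
Write `N = C(n, 2)`. At most `(N + 1) ^ m` subsets of an `N`-set have at most `m` elements, the
middle binomial coefficient is at least the average `2 ^ N / (N + 1)`, and `N + 1 ≤ n ^ 2`. Hence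
`n! * ∑ k ≤ m, C(N, k) / C(N, ⌊N/2⌋) ≤ n ^ (n + 2m + 2) / 2 ^ N`, and the right-hand side vanishes
in the limit as soon as `m * log n = o(n ^ 2)`, because `N` grows quadratically.
-/

open Asymptotics Filter Finset Topology

theorem sum_range_succ_choose_le_succ_pow (N m : ℕ) :
    ∑ k ∈ range (m + 1), N.choose k ≤ (N + 1) ^ m := by
  induction m with
  | zero => simp
  | succ m ih =>
    have choose_le : N.choose (m + 1) ≤ (N + 1) ^ m * N :=
      calc N.choose (m + 1) ≤ N ^ m * N := Nat.choose_le_pow N (m + 1)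
        _ ≤ (N + 1) ^ m * N := by gcongr; exact N.le_succ
    calc ∑ k ∈ range (m + 2), N.choose k
        = ∑ k ∈ range (m + 1), N.choose k + N.choose (m + 1) := sum_range_succ _ _
      _ ≤ (N + 1) ^ m + (N + 1) ^ m * N := add_le_add ih choose_le
      _ = (N + 1) ^ (m + 1) := by ring

theorem two_pow_le_succ_mul_choose_middle (N : ℕ) : 2 ^ N ≤ (N + 1) * N.choose (N / 2) :=
  calc 2 ^ N = ∑ k ∈ range (N + 1), N.choose k := (Nat.sum_range_choose N).symm
    _ ≤ #(range (N + 1)) • N.choose (N / 2) :=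
      sum_le_card_nsmul _ _ _ fun k _ => Nat.choose_le_middle k N
    _ = (N + 1) * N.choose (N / 2) := by rw [card_range, smul_eq_mul]

theorem choose_two_add_one_le_sq {n : ℕ} (hn : 1 ≤ n) : n.choose 2 + 1 ≤ n ^ 2 := by
  induction n, hn using Nat.le_induction with
  | base => simp
  | succ n _ ih =>
    rw [Nat.choose_succ_succ' n 1, Nat.choose_one_right]
    nlinarith

theorem factorial_mul_sum_choose_mul_two_pow_le {n : ℕ} (hn : 1 ≤ n) (m : ℕ) :
    (n.factorial * ∑ k ∈ range (m + 1), (n.choose 2).choose k) * 2 ^ n.choose 2 ≤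
      n ^ (n + 2 * m + 2) * (n.choose 2).choose (n.choose 2 / 2) := by
  set N := n.choose 2
  have hN : N + 1 ≤ n ^ 2 := choose_two_add_one_le_sq hn
  calc (n.factorial * ∑ k ∈ range (m + 1), N.choose k) * 2 ^ N
      ≤ (n ^ n * (N + 1) ^ m) * ((N + 1) * N.choose (N / 2)) := by
        gcongr
        · exact Nat.factorial_le_pow n
        · exact sum_range_succ_choose_le_succ_pow N m
        · exact two_pow_le_succ_mul_choose_middle N
    _ ≤ (n ^ n * (n ^ 2) ^ m) * (n ^ 2 * N.choose (N / 2)) := by gcongr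
    _ = n ^ (n + 2 * m + 2) * N.choose (N / 2) := by ring

theorem factorial_mul_sum_choose_div_choose_middle_le {n : ℕ} (hn : 1 ≤ n) (m : ℕ) :
    ((n.factorial : ℝ) * ∑ k ∈ range (m + 1), ((n.choose 2).choose k : ℝ)) /
        ((n.choose 2).choose (n.choose 2 / 2) : ℝ) ≤
      (n : ℝ) ^ (n + 2 * m + 2) / 2 ^ n.choose 2 := by
  have choose_middle_pos : 0 < (n.choose 2).choose (n.choose 2 / 2) :=
    Nat.choose_pos (Nat.div_le_self _ _)
  rw [div_le_div_iff₀ (by exact_mod_cast choose_middle_pos) (by positivity)]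
  exact_mod_cast factorial_mul_sum_choose_mul_two_pow_le hn m

theorem tendsto_choose_atTop {k : ℕ} (hk : k ≠ 0) :
    Tendsto (fun n : ℕ => n.choose k) atTop atTop := by
  have pow_div_atTop : Tendsto (fun n : ℕ => (n : ℝ) ^ k / k.factorial) atTop atTop :=
    ((tendsto_pow_atTop hk).comp tendsto_natCast_atTop_atTop).atTop_div_const (by positivity)
  exact tendsto_natCast_atTop_iff.1 ((isEquivalent_choose k).symm.tendsto_atTop pow_div_atTop)

theorem tendsto_pow_div_pow_nhds_zero_of_isLittleO {ι : Type*} {l : Filter ι} {x : ι → ℝ}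
    {e N : ι → ℕ} {b : ℝ} (hb : 1 < b) (hx : ∀ᶠ i in l, 0 < x i) (hN : Tendsto N l atTop)
    (he : (fun i => (e i : ℝ) * Real.log (x i)) =o[l] fun i => (N i : ℝ)) :
    Tendsto (fun i => x i ^ e i / b ^ N i) l (𝓝 0) := by
  have log_b_pos : 0 < Real.log b := Real.log_pos hb
  have denom_log_atTop : Tendsto (fun i => Real.log b * (N i : ℝ)) l atTop :=
    (tendsto_natCast_atTop_atTop.comp hN).const_mul_atTop log_b_pos
  have numer_log_isLittleO :
      (fun i => (e i : ℝ) * Real.log (x i)) =o[l] fun i => Real.log b * (N i : ℝ) :=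
    he.trans_isBigO (isBigO_self_const_mul log_b_pos.ne' _ _)
  have log_diff_atTop :
      Tendsto (fun i => Real.log b * (N i : ℝ) - e i * Real.log (x i)) l atTop :=
    (IsEquivalent.refl.sub_isLittleO numer_log_isLittleO).symm.tendsto_atTop denom_log_atTop
  refine (Real.tendsto_exp_neg_atTop_nhds_zero.comp log_diff_atTop).congr' ?_
  filter_upwards [hx] with i hxi
  rw [Function.comp_apply, neg_sub, Real.exp_sub, Real.exp_nat_mul, mul_comm (Real.log b),
    Real.exp_nat_mul, Real.exp_log hxi, Real.exp_log (zero_lt_one.trans hb)]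

theorem mul_log_isLittleO_sq_of_isBigO {f : ℕ → ℝ} (hf : f =O[atTop] fun n => (n : ℝ)) :
    (fun n => f n * Real.log n) =o[atTop] fun n => (n : ℝ) ^ 2 := by
  have log_isLittleO : (fun n : ℕ => Real.log n) =o[atTop] fun n => (n : ℝ) :=
    Real.isLittleO_log_id_atTop.comp_tendsto tendsto_natCast_atTop_atTop
  simpa only [sq] using hf.mul_isLittleO log_isLittleO

theorem add_two_mul_add_two_mul_log_isLittleO_sq {m : ℕ → ℕ}
    (hm : (fun n => (m n : ℝ) * Real.log n) =o[atTop] fun n => (n : ℝ) ^ 2) :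
    (fun n => ((n + 2 * m n + 2 : ℕ) : ℝ) * Real.log n) =o[atTop] fun n => (n : ℝ) ^ 2 := by
  have linear_part : (fun n : ℕ => ((n : ℝ) + 2) * Real.log n) =o[atTop] fun n => (n : ℝ) ^ 2 :=
    mul_log_isLittleO_sq_of_isBigO <| (isBigO_refl _ _).add
      (isLittleO_const_left.2 <| .inr <| tendsto_norm_atTop_atTop.comp
        tendsto_natCast_atTop_atTop).isBigO
  refine (linear_part.add (hm.const_mul_left 2)).congr_left fun n => ?_
  push_cast
  ring

theorem natCast_mul_sub_isBigO (c d : ℕ) :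
    (fun n : ℕ => ((c * n - d : ℕ) : ℝ)) =O[atTop] fun n => (n : ℝ) :=
  .of_bound c <| .of_forall fun n => by
    simpa only [RCLike.norm_natCast] using mod_cast Nat.sub_le (c * n) d

theorem stmt_11_general {m : ℕ → ℕ}
    (hm : (fun n => (m n : ℝ) * Real.log n) =o[atTop] fun n => (n : ℝ) ^ 2) :
    Tendsto (fun n : ℕ =>
        ((n.factorial : ℝ) * ∑ k ∈ range (m n + 1), ((n.choose 2).choose k : ℝ)) /
          ((n.choose 2).choose (n.choose 2 / 2) : ℝ))
      atTop (𝓝 0) := by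
  have exponent_isLittleO :
      (fun n => ((n + 2 * m n + 2 : ℕ) : ℝ) * Real.log n) =o[atTop]
        fun n => (n.choose 2 : ℝ) :=
    (add_two_mul_add_two_mul_log_isLittleO_sq hm).trans_isBigO (isTheta_choose 2).isBigO_symm
  have bound_tendsto :
      Tendsto (fun n : ℕ => (n : ℝ) ^ (n + 2 * m n + 2) / 2 ^ n.choose 2) atTop (𝓝 0) :=
    tendsto_pow_div_pow_nhds_zero_of_isLittleO one_lt_two
      (tendsto_natCast_atTop_atTop.eventually_gt_atTop 0)
      (tendsto_choose_atTop two_ne_zero) exponent_isLittleO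
  refine squeeze_zero' (.of_forall fun n => by positivity) ?_ bound_tendsto
  filter_upwards [eventually_ge_atTop 1] with n hn
  exact factorial_mul_sum_choose_div_choose_middle_le hn (m n)

open Finset Filter in
/-- With `N = C(n,2)` and `q = ⌊N/2⌋`, the sequence
`n! · (∑_{k=0}^{5n-15} C(N,k)) / C(N,q)` tends to `0` as `n → ∞`. -/
theorem stmt_11 :
    Tendsto (fun n : ℕ =>
        ((n.factorial : ℝ) * ∑ k ∈ range (5 * n - 15 + 1), ((n.choose 2).choose k : ℝ)) /
          ((n.choose 2).choose (n.choose 2 / 2) : ℝ))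
      atTop (nhds 0) := by
  exact stmt_11_general (mul_log_isLittleO_sq_of_isBigO (natCast_mul_sub_isBigO 5 15))
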